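/- Let m ∈ ℕ with m ≥ 1, let h : ℕ → ℕ be a polynomial with coefficients in ℕ and zero constant term, let a₁,…,a_m ∈ ℕ, let p₁,…,p_m be minimal idempotent ultrafilters on ℕ, and let A ∈ h̃(a₁·p₁ + ⋯ + a_m·p_m), where h̃ denotes the pushforward of ultrafilters along h. Then for every T ∈ 𝒫_f(ℙ) there exist functions α₁,…,α_m : 𝒫_f(ℕ^ℕ) → ℕ and H₁,…,H_m : 𝒫_f(ℕ^ℕ) → 𝒫_f(ℕ) such that (1) whenever F ⊊ G in 𝒫_f(ℕ^ℕ), max H_l(F) < min H_l(G) for every l ∈ {1,…,m}, and (2) when127ever G₁ ⊊ G₂ ⊊ ⋯ is an infinite strictly increasing chain in 𝒫_f(ℕ^ℕ), f_i ∈ G_i for each i ∈ ℕ, P₁,…,P_m ∈ T, and β₁ < ⋯ < β_m are in 𝒫_f(ℕ), then h(Σ_{l=1}^m a_l·(Σ_{i∈β_l}α_l(G_i) + P_l(Σ_{i∈β_l}Σ_{t∈H_l(G_i)}f_i(t)))) ∈ A. -/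

import Mathlib

namespace MultiCST

/-- The sum `p + q` of ultrafilters on ℕ: `A ∈ p + q` iff `{x : {y : x+y ∈ A} ∈ q} ∈ p`. -/
def uAdd (p q : Ultrafilter ℕ) : Ultrafilter ℕ :=
  p.bind fun x => q.map fun y => x + y

/-- `A ⊆ ℕ` is a J-set. -/
def IsJSet (A : Set ℕ) : Prop :=
  ∀ F : Finset (ℕ → ℕ), F.Nonempty →
    ∃ (a : ℕ) (β : Finset ℕ), β.Nonempty ∧ ∀ f ∈ F, a + ∑ t ∈ β, f t ∈ A

/-- `p ∈ 𝒥`: every member of `p` is a J-set. -/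
def MemJ (p : Ultrafilter ℕ) : Prop := ∀ A : Set ℕ, A ∈ p → IsJSet A

/-- `p` is an idempotent ultrafilter. -/
def IdempotentUF (p : Ultrafilter ℕ) : Prop := uAdd p p = p

/-- `p` is a minimal idempotent ultrafilter. -/
def IsMinimalIdempotent (p : Ultrafilter ℕ) : Prop :=
  IdempotentUF p ∧
    ∀ q : Ultrafilter ℕ, IdempotentUF q → uAdd q p = q → uAdd p q = q → q = p

/-- Tensor product `⊗_{i=1}^m p_i` of ultrafilters on ℕ, as an ultrafilter on `Fin m → ℕ`. -/
def tensor : ∀ m : ℕ, (Fin m → Ultrafilter ℕ) → Ultrafilter (Fin m → ℕ)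
  | 0, _ => pure fun i => i.elim0
  | m + 1, p =>
      (p 0).bind fun x => (tensor m fun i => p i.succ).map fun v => Fin.cons x v

/-- `f : ℕ → ℕ` is (given by) a polynomial with coefficients in ℕ and zero constant term. -/
def IsPolyZeroConst (f : ℕ → ℕ) : Prop :=
  ∃ P : Polynomial ℕ, P.coeff 0 = 0 ∧ ∀ x, f x = P.eval x

/-- The linear combination `a₁·p₁ + a₂·p₂ + ⋯ + a_m·p_m` of ultrafilters on ℕ. -/
def linComb : ∀ m : ℕ, (Fin m → ℕ) → (Fin m → Ultrafilter ℕ) → Ultrafilter ℕ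
  | 0, _, _ => pure 0
  | m + 1, a, p =>
      uAdd ((p 0).map fun x => a 0 * x)
        (linComb m (fun i => a i.succ) fun i => p i.succ)


/-- A syndeticity-type system of ultrafilters on ℤ exists. -/
theorem exists_minimal_system : ∃ L : Set (Ultrafilter ℤ), L.Nonempty ∧
    (∀ r ∈ L, ∀ n : ℤ, r.map (fun x => n + x) ∈ L) ∧
    (∀ S : Set ℤ, (∃ r ∈ L, S ∈ r) →
      ∃ E : Finset ℤ, ∀ r ∈ L, ∃ t ∈ E, {b : ℤ | t + b ∈ S} ∈ r) := by
  let Z : Set (Set (Ultrafilter ℤ)) :=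
    {N | IsClosed N ∧ N.Nonempty ∧ ∀ r ∈ N, ∀ n : ℤ, r.map (fun x => n + x) ∈ N}
  obtain ⟨L, hL⟩ : ∃ N, Minimal (· ∈ Z) N := by
    refine zorn_superset _ fun c hcs hc => ?_
    refine ⟨⋂₀ c, ⟨isClosed_sInter fun t ht => (hcs ht).1, ?_, fun m hm n => ?_⟩, fun s hs =>
      Set.sInter_subset_of_mem hs⟩
    · obtain rfl | hcnemp := c.eq_empty_or_nonempty
      · rw [Set.sInter_empty]
        apply Set.univ_nonempty
      convert!
        @IsCompact.nonempty_iInter_of_directed_nonempty_isCompact_isClosed _ _ _ hcnemp.coe_sort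
          ((↑) : c → Set (Ultrafilter ℤ)) ?_ ?_ ?_ ?_
      · exact Set.sInter_eq_iInter
      · exact DirectedOn.directed_val (IsChain.directedOn hc.symm)
      exacts [fun i => (hcs i.prop).2.1, fun i => (hcs i.prop).1.isCompact,
        fun i => (hcs i.prop).1]
    · rw [Set.mem_sInter]
      exact fun t ht => (hcs ht).2.2 m (Set.mem_sInter.mp hm t ht) n
  obtain ⟨hcl, hne, hinv⟩ := hL.prop
  refine ⟨L, hne, hinv, ?_⟩
  rintro S ⟨r, hr, hS⟩
  have hopen : ∀ t : ℤ, IsOpen {r : Ultrafilter ℤ | {b : ℤ | t + b ∈ S} ∈ r} :=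
    fun t => ultrafilter_isOpen_basic _
  have hcov : L ⊆ ⋃ t : ℤ, {r : Ultrafilter ℤ | {b : ℤ | t + b ∈ S} ∈ r} := by
    by_contra hcon
    rw [Set.not_subset] at hcon
    obtain ⟨r0, hr0, hn0⟩ := hcon
    have hmem : L ∩ (⋃ t : ℤ, {r : Ultrafilter ℤ | {b : ℤ | t + b ∈ S} ∈ r})ᶜ ∈ Z := by
      refine ⟨hcl.inter (isOpen_iUnion hopen).isClosed_compl, ⟨r0, hr0, hn0⟩, ?_⟩
      rintro r1 ⟨h1, h2⟩ n
      refine ⟨hinv r1 h1 n, ?_⟩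
      intro h3
      apply h2
      rw [Set.mem_iUnion] at h3 ⊢
      obtain ⟨t, ht⟩ := h3
      refine ⟨t + n, ?_⟩
      have ht' : {b : ℤ | t + b ∈ S} ∈ r1.map (fun x => n + x) := ht
      rw [Ultrafilter.mem_map] at ht'
      have : {b : ℤ | t + n + b ∈ S} = (fun x => n + x) ⁻¹' {b : ℤ | t + b ∈ S} := by
        ext b; simp [add_assoc]
      show {b : ℤ | t + n + b ∈ S} ∈ r1
      rw [this]; exact ht'
    have heq := hL.eq_of_subset hmem Set.inter_subset_left
    rw [← heq] at hr
    apply hr.2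
    rw [Set.mem_iUnion]
    refine ⟨0, ?_⟩
    show {b : ℤ | 0 + b ∈ S} ∈ r
    simpa using hS
  obtain ⟨E, hE⟩ := hcl.isCompact.elim_finite_subcover _ hopen hcov
  refine ⟨E, fun r hr => ?_⟩
  have := hE hr
  simp only [Set.mem_iUnion] at this
  obtain ⟨t, ht, h⟩ := this
  exact ⟨t, ht, h⟩

/-- polynomial maps without constant term of degree at most `d`. -/
def IsP {G : Type*} [AddCommGroup G] : ℕ → (G → ℤ) → Prop
  | 0, P => ∀ w, P w = 0
  | d + 1, P => P 0 = 0 ∧ ∀ u, IsP d (fun w => P (u + w) - P u - P w)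

section
variable {G : Type*} [AddCommGroup G]

theorem IsP.zero (d : ℕ) : IsP d (fun _ : G => (0 : ℤ)) := by
  induction d with
  | zero => intro w; rfl
  | succ d ih => exact ⟨rfl, fun u => by simpa using ih⟩

theorem IsP.map_zero {d : ℕ} {P : G → ℤ} (h : IsP d P) : P 0 = 0 := by
  cases d with
  | zero => exact h 0
  | succ d => exact h.1

theorem IsP.succ {d : ℕ} {P : G → ℤ} (h : IsP d P) : IsP (d + 1) P := by
  induction d generalizing P with
  | zero =>
    have : P = fun _ => 0 := funext h
    rw [this]; exact IsP.zero 1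
  | succ d ih => exact ⟨h.1, fun u => ih (h.2 u)⟩

theorem IsP.mono {d e : ℕ} (hde : d ≤ e) {P : G → ℤ} (h : IsP d P) : IsP e P := by
  induction e, hde using Nat.le_induction with
  | base => exact h
  | succ n _ ih => exact ih.succ

theorem IsP.add {d : ℕ} {P Q : G → ℤ} (hP : IsP d P) (hQ : IsP d Q) :
    IsP d (fun w => P w + Q w) := by
  induction d generalizing P Q with
  | zero => intro w; simp [hP w, hQ w]
  | succ d ih =>
    refine ⟨by simp [hP.1, hQ.1], fun u => ?_⟩
    convert ih (hP.2 u) (hQ.2 u) using 2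
    ring

theorem IsP.smul {d : ℕ} {P : G → ℤ} (c : ℤ) (hP : IsP d P) :
    IsP d (fun w => c * P w) := by
  induction d generalizing P with
  | zero => intro w; simp [hP w]
  | succ d ih =>
    refine ⟨by simp [hP.1], fun u => ?_⟩
    convert ih (hP.2 u) using 2
    ring

theorem IsP.sub {d : ℕ} {P Q : G → ℤ} (hP : IsP d P) (hQ : IsP d Q) :
    IsP d (fun w => P w - Q w) := by
  convert hP.add (hQ.smul (-1)) using 2
  ring

theorem IsP.sum {ι : Type*} {d : ℕ} (s : Finset ι) (f : ι → G → ℤ)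
    (h : ∀ i ∈ s, IsP d (f i)) : IsP d (fun w => ∑ i ∈ s, f i w) := by
  classical
  induction s using Finset.induction_on with
  | empty => simpa using IsP.zero d
  | insert a s ha ih =>
    simp only [Finset.sum_insert ha]
    exact (h a (Finset.mem_insert_self _ _)).add
      (ih fun i hi => h i (Finset.mem_insert_of_mem hi))

theorem IsP.comp {G' : Type*} [AddCommGroup G'] {d : ℕ} {P : G → ℤ} (hP : IsP d P)
    (φ : G' →+ G) : IsP d (fun w => P (φ w)) := by
  induction d generalizing P with
  | zero => intro w; exact hP _
  | succ d ih =>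
    refine ⟨by simp [hP.1], fun u => ?_⟩
    simpa using ih (hP.2 (φ u))

theorem isP_pow (n : ℕ) (hn : n ≠ 0) : IsP n (fun w : ℤ => w ^ n) := by
  induction n using Nat.strong_induction_on with
  | _ n ih =>
    obtain ⟨n, rfl⟩ := Nat.exists_eq_succ_of_ne_zero hn
    refine ⟨by simp, fun u => ?_⟩
    have : (fun w : ℤ => (u + w) ^ (n + 1) - u ^ (n + 1) - w ^ (n + 1)) =
        fun w => ∑ k ∈ Finset.range n,
          (u ^ (n - k) * ((n + 1).choose (k + 1) : ℤ)) * w ^ (k + 1) := by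
      funext w
      rw [add_comm u w, add_pow, Finset.sum_range_succ, Finset.sum_range_succ']
      have : ∀ k ∈ Finset.range n, w ^ (k + 1) * u ^ (n + 1 - (k + 1)) *
          ((n + 1).choose (k + 1) : ℤ) =
          (u ^ (n - k) * ((n + 1).choose (k + 1) : ℤ)) * w ^ (k + 1) := by
        intro k hk
        rw [Nat.add_sub_add_right]; ring
      rw [Finset.sum_congr rfl this]
      simp
      ring
    rw [show (fun w : ℤ => (u + w) ^ n.succ - u ^ n.succ - w ^ n.succ) = _ from this]
    refine IsP.sum _ _ fun k hk => ?_
    rw [Finset.mem_range] at hk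
    exact ((ih (k + 1) (by omega) (by omega)).mono (by omega)).smul _

theorem isP_eval (P : Polynomial ℕ) (h0 : P.coeff 0 = 0) :
    IsP P.natDegree (fun w : ℤ => ∑ n ∈ Finset.range (P.natDegree + 1), (P.coeff n : ℤ) * w ^ n) := by
  refine IsP.sum _ _ fun n hn => ?_
  rw [Finset.mem_range] at hn
  by_cases h : n = 0
  · subst h
    simpa [h0] using IsP.zero _
  · exact ((isP_pow n h).mono (by omega)).smul _


/-- `S` belongs to some ultrafilter of `L`. -/
def Large (L : Set (Ultrafilter ℤ)) (S : Set ℤ) : Prop := ∃ r ∈ L, S ∈ r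

theorem Large.mono {L : Set (Ultrafilter ℤ)} {S S' : Set ℤ} (h : Large L S) (hs : S ⊆ S') :
    Large L S' := by
  obtain ⟨r, hr, hS⟩ := h
  exact ⟨r, hr, Filter.mem_of_superset hS hs⟩

theorem Large.shift {L : Set (Ultrafilter ℤ)}
    (hinv : ∀ r ∈ L, ∀ n : ℤ, r.map (fun x => n + x) ∈ L)
    {S S' : Set ℤ} (h : Large L S) (n : ℤ) (hs : ∀ b ∈ S, n + b ∈ S') : Large L S' := by
  obtain ⟨r, hr, hS⟩ := h
  refine ⟨_, hinv r hr n, ?_⟩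
  rw [Ultrafilter.mem_map]
  exact Filter.mem_of_superset hS hs

theorem iterate_step (L : Set (Ultrafilter ℤ))
    (hinv : ∀ r ∈ L, ∀ n : ℤ, r.map (fun x => n + x) ∈ L)
    (hsynd : ∀ S : Set ℤ, (∃ r ∈ L, S ∈ r) →
      ∃ E : Finset ℤ, ∀ r ∈ L, ∃ t ∈ E, {b : ℤ | t + b ∈ S} ∈ r)
    (x : ℕ → G) (Ps : Finset (G → ℤ)) (h0 : ∀ P ∈ Ps, P 0 = 0)
    (step : ∀ (U : Finset G) (D : Set ℤ) (N : ℕ), Large L D →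
      ∃ H : Finset ℕ, H.Nonempty ∧ (∀ t ∈ H, N < t) ∧
        Large L {b | ∀ P ∈ Ps, ∀ u ∈ U, b + (P (u + ∑ t ∈ H, x t) - P u) ∈ D})
    (S : Set ℤ) (N : ℕ) (hS : Large L S) :
    ∃ H : Finset ℕ, H.Nonempty ∧ (∀ t ∈ H, N < t) ∧
      Large L {b | b ∈ S ∧ ∀ P ∈ Ps, b + P (∑ t ∈ H, x t) ∈ S} := by
  classical
  obtain ⟨E, hE⟩ := hsynd S hS
  by_contra hno
  have key : ∀ k : ℕ, ∃ τ : Finset ℤ, τ ⊆ E ∧ τ.card = k ∧ ∃ (u : ℤ → Finset ℕ) (M : ℕ),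
      N ≤ M ∧ (∀ t ∈ τ, ∀ n ∈ u t, N < n ∧ n ≤ M) ∧ ∃ D : Set ℤ, Large L D ∧
        ∀ b ∈ D, ∀ t ∈ τ, ∀ P ∈ Ps, t + (b + P (∑ n ∈ u t, x n)) ∈ S := by
    intro k
    induction k with
    | zero =>
      exact ⟨∅, by simp, rfl, fun _ => ∅, N, le_rfl, by simp, S, hS, by simp⟩
    | succ k ih =>
      obtain ⟨τ, hτE, hτk, u, M, hNM, hu, D, hD, hDS⟩ := ih
      obtain ⟨H, hHne, hHM, r, hr, hH⟩ := step (τ.image fun t => ∑ n ∈ u t, x n) D M hD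
      obtain ⟨t', ht'E, ht'⟩ := hE r hr
      have hnew : Large L ({b | ∀ P ∈ Ps, ∀ u' ∈ τ.image (fun t => ∑ n ∈ u t, x n),
          b + (P (u' + ∑ t ∈ H, x t) - P u') ∈ D} ∩ {b : ℤ | t' + b ∈ S}) :=
        ⟨r, hr, Filter.inter_mem hH ht'⟩
      have hgood : ∀ b ∈ ({b | ∀ P ∈ Ps, ∀ u' ∈ τ.image (fun t => ∑ n ∈ u t, x n),
          b + (P (u' + ∑ t ∈ H, x t) - P u') ∈ D} ∩ {b : ℤ | t' + b ∈ S}),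
          ∀ t ∈ τ, ∀ P ∈ Ps, t + (b + P (∑ n ∈ u t ∪ H, x n)) ∈ S := by
        rintro b ⟨hb1, hb2⟩ t ht P hP
        have h1 := hDS _ (hb1 P hP _ (Finset.mem_image_of_mem _ ht)) t ht P hP
        have hdisj : Disjoint (u t) H := by
          rw [Finset.disjoint_left]
          intro n hn hn'
          have := (hu t ht n hn).2
          have := hHM n hn'
          omega
        rw [Finset.sum_union hdisj]
        convert h1 using 1
        ring
      by_cases htt : t' ∈ τ
      · exfalso
        apply hno
        refine ⟨u t' ∪ H, hHne.mono Finset.subset_union_right, ?_, ?_⟩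
        · intro n hn
          rcases Finset.mem_union.1 hn with hn | hn
          · exact (hu t' htt n hn).1
          · exact lt_of_le_of_lt hNM (hHM n hn)
        · refine hnew.shift hinv t' ?_
          intro b hb
          refine ⟨hb.2, fun P hP => ?_⟩
          have := hgood b hb t' htt P hP
          rwa [← add_assoc] at this
      · refine ⟨insert t' τ, Finset.insert_subset ht'E hτE, by
          rw [Finset.card_insert_of_notMem htt, hτk],
          fun t => if t = t' then ∅ else u t ∪ H, max M (H.sup id), le_max_of_le_left hNM,
          ?_, _, hnew, ?_⟩
        · intro t ht n hn
          by_cases h : t = t'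
          · simp [h] at hn
          · have ht2 : t ∈ τ := (Finset.mem_insert.1 ht).resolve_left h
            simp only [h, if_false] at hn
            rcases Finset.mem_union.1 hn with hn | hn
            · exact ⟨(hu t ht2 n hn).1, le_max_of_le_left (hu t ht2 n hn).2⟩
            · exact ⟨lt_of_le_of_lt hNM (hHM n hn),
                le_max_of_le_right (Finset.le_sup (f := id) hn)⟩
        · intro b hb t ht P hP
          by_cases h : t = t'
          · have := hb.2
            simp only [h, if_true, Finset.sum_empty, h0 P hP, add_zero]
            exact this
          · have ht2 : t ∈ τ := (Finset.mem_insert.1 ht).resolve_left h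
            simp only [h, if_false]
            exact hgood b hb t ht2 P hP
  obtain ⟨τ, hτ, hc, -⟩ := key (E.card + 1)
  have := Finset.card_le_card hτ
  omega

theorem pet (L : Set (Ultrafilter ℤ))
    (hinv : ∀ r ∈ L, ∀ n : ℤ, r.map (fun x => n + x) ∈ L)
    (hsynd : ∀ S : Set ℤ, (∃ r ∈ L, S ∈ r) →
      ∃ E : Finset ℤ, ∀ r ∈ L, ∃ t ∈ E, {b : ℤ | t + b ∈ S} ∈ r)
    (x : ℕ → G) (W : Multiset ℕ) :
    ∀ M : Multiset ((G → ℤ) × ℕ), M.map Prod.snd = W →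
    (∀ c ∈ M, IsP (c.2 + 1) c.1) →
    ∀ Ps : Finset (G → ℤ),
    (∀ P ∈ Ps, IsP 0 P ∨ ∃ c ∈ M, IsP c.2 (fun w => P w - c.1 w)) →
    ∀ (S : Set ℤ) (N : ℕ), Large L S →
    ∃ H : Finset ℕ, H.Nonempty ∧ (∀ t ∈ H, N < t) ∧
      Large L {b | b ∈ S ∧ ∀ P ∈ Ps, b + P (∑ t ∈ H, x t) ∈ S} := by
  classical
  induction W using (Multiset.wellFounded_isDershowitzMannaLT (α := ℕ)).induction with
  | _ W ih =>
  intro M hMW hM Ps hPs S N hS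
  let Ps' := Ps.filter fun P => ¬ IsP 0 P
  have hPs' : ∀ P ∈ Ps', ∃ c ∈ M, IsP c.2 (fun w => P w - c.1 w) := by
    intro P hP
    rw [Finset.mem_filter] at hP
    exact (hPs P hP.1).resolve_left hP.2
  have hdeg : ∀ P : G → ℤ, ∀ c ∈ M, IsP c.2 (fun w => P w - c.1 w) → IsP (c.2 + 1) P := by
    intro P c hc h
    simpa using h.succ.add (hM c hc)
  suffices hmain : ∃ H : Finset ℕ, H.Nonempty ∧ (∀ t ∈ H, N < t) ∧
      Large L {b | b ∈ S ∧ ∀ P ∈ Ps', b + P (∑ t ∈ H, x t) ∈ S} by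
    obtain ⟨H, h1, h2, h3⟩ := hmain
    refine ⟨H, h1, h2, h3.mono ?_⟩
    rintro b ⟨hb, hb'⟩
    refine ⟨hb, fun P hP => ?_⟩
    by_cases h : IsP 0 P
    · rw [h]; simpa using hb
    · exact hb' P (Finset.mem_filter.2 ⟨hP, h⟩)
  refine iterate_step L hinv hsynd x Ps' (fun P hP => ?_) ?_ S N hS
  · obtain ⟨c, hc, h⟩ := hPs' P hP
    exact (hdeg P c hc h).map_zero
  intro U D N hD
  by_cases hemp : Ps' = ∅
  · refine ⟨{N + 1}, by simp, by simp, hD.mono ?_⟩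
    intro b _ P hP
    rw [hemp] at hP
    simp at hP
  have hex : ∃ d : ℕ, ∃ Q ∈ Ps', ∃ c ∈ M, c.2 = d ∧ IsP c.2 (fun w => Q w - c.1 w) := by
    obtain ⟨Q, hQ⟩ := Finset.nonempty_iff_ne_empty.2 hemp
    obtain ⟨c, hc, h⟩ := hPs' Q hQ
    exact ⟨_, Q, hQ, c, hc, rfl, h⟩
  obtain ⟨Q, hQ, c, hc, hcd, hcQ⟩ := Nat.find_spec hex
  have hmin : ∀ P ∈ Ps', ∀ c' ∈ M, IsP c'.2 (fun w => P w - c'.1 w) → c.2 ≤ c'.2 := by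
    intro P hP c' hc' h
    rw [hcd]
    exact Nat.find_min' hex ⟨P, hP, c', hc', rfl, h⟩
  have hQdeg := hdeg Q c hc hcQ
  let R : (G → ℤ) × G → G → ℤ := fun z w => z.1 (z.2 + w) - z.1 z.2 - Q w
  let Rs : Finset (G → ℤ) := (Ps' ×ˢ U).image R
  let M1 := (M.erase c).filter fun c' => c.2 ≤ c'.2
  let Y : Multiset ((G → ℤ) × ℕ) :=
    if c.2 = 0 then 0 else ((Rs.filter fun P => IsP c.2 P).val.map fun P => (P, c.2 - 1))
  let M2 := M1.map (fun c' => ((fun w => c'.1 w - Q w : G → ℤ), c'.2)) + Y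
  have hlt : Multiset.IsDershowitzMannaLT (M2.map Prod.snd) W := by
    refine ⟨M1.map Prod.snd, Y.map Prod.snd,
      (c ::ₘ (M.erase c).filter fun c' => ¬ c.2 ≤ c'.2).map Prod.snd, ?_, ?_, ?_, ?_⟩
    · simp
    · simp [M2, Multiset.map_map]
    · rw [← hMW, ← Multiset.map_add]
      congr 1
      rw [Multiset.add_cons, Multiset.filter_add_not, Multiset.cons_erase hc]
    · intro y hy
      refine ⟨c.2, by simp, ?_⟩
      by_cases h : c.2 = 0
      · simp [Y, h] at hy
      · simp only [Y, h, if_false, Multiset.mem_map] at hy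
        obtain ⟨a, ⟨b, _, rfl⟩, rfl⟩ := hy
        show c.2 - 1 < c.2
        omega
  have hc1 : ∀ c ∈ M2, IsP (c.2 + 1) c.1 := by
    intro e he
    rcases Multiset.mem_add.1 he with he | he
    · obtain ⟨c', hc', rfl⟩ := Multiset.mem_map.1 he
      rw [Multiset.mem_filter] at hc'
      exact (hM c' (Multiset.mem_of_mem_erase hc'.1)).sub
        (hQdeg.mono (Nat.succ_le_succ hc'.2))
    · by_cases h : c.2 = 0
      · simp [Y, h] at he
      · simp only [Y, h, if_false, Multiset.mem_map] at he
        obtain ⟨P, hP, rfl⟩ := he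
        have := (Finset.mem_filter.1 hP).2
        show IsP (c.2 - 1 + 1) P
        rwa [Nat.sub_add_cancel (Nat.pos_of_ne_zero h)]
  have hc2 : ∀ P ∈ Rs, IsP 0 P ∨ ∃ c ∈ M2, IsP c.2 (fun w => P w - c.1 w) := by
    intro P hP
    obtain ⟨⟨P, u⟩, hPu, rfl⟩ := Finset.mem_image.1 hP
    rw [Finset.mem_product] at hPu
    obtain ⟨c', hc', h⟩ := hPs' P hPu.1
    have hPdeg := hdeg P c' hc' h
    have hle := hmin P hPu.1 c' hc' h
    by_cases hcc : c' = c
    · subst hcc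
      have hR : IsP c'.2 (R (P, u)) := by
        convert (h.sub hcQ).add (hPdeg.2 u) using 2
        simp only [R]
        ring
      by_cases h0 : c'.2 = 0
      · left; rwa [h0] at hR
      · right
        refine ⟨(R (P, u), c'.2 - 1), ?_, ?_⟩
        · apply Multiset.mem_add.2; right
          simp only [Y, h0, if_false, Multiset.mem_map]
          exact ⟨_, Finset.mem_filter.2 ⟨hP, hR⟩, rfl⟩
        · simpa using IsP.zero _
    · right
      refine ⟨((fun w => c'.1 w - Q w : G → ℤ), c'.2), ?_, ?_⟩
      · apply Multiset.mem_add.2; left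
        refine Multiset.mem_map.2 ⟨c', ?_, rfl⟩
        exact Multiset.mem_filter.2 ⟨(Multiset.mem_erase_of_ne hcc).2 hc', hle⟩
      · convert h.add (hPdeg.2 u) using 2
        simp only [R]
        ring
  obtain ⟨H, hH1, hH2, hH3⟩ := ih _ hlt M2 rfl hc1 Rs hc2 D N hD
  refine ⟨H, hH1, hH2, hH3.shift hinv (-Q (∑ t ∈ H, x t)) ?_⟩
  rintro b ⟨-, hb⟩ P hP u hu
  have := hb (R (P, u)) (Finset.mem_image_of_mem _ (Finset.mk_mem_product hP hu))
  convert this using 1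
  simp only [R]
  ring

end

/-- `A` contains a configuration. -/
def HasConf (F : Finset (ℕ → ℕ)) (T : Finset (Polynomial ℕ)) (N : ℕ) (A : Set ℕ) : Prop :=
  ∃ (α : ℕ) (H : Finset ℕ), H.Nonempty ∧ (∀ t ∈ H, N < t) ∧
    ∀ f ∈ F, ∀ P ∈ T, α + P.eval (∑ t ∈ H, f t) ∈ A

theorem exists_conf_ultrafilter (F : Finset (ℕ → ℕ)) (T : Finset (Polynomial ℕ))
    (hT : ∀ P ∈ T, P.coeff 0 = 0) (N : ℕ) :
    ∃ r : Ultrafilter ℕ, ∀ A ∈ r, HasConf F T N A := by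
  classical
  obtain ⟨L, ⟨r, hr⟩, hinv, hsynd⟩ := exists_minimal_system
  let q : Ultrafilter ℕ := Filter.hyperfilter ℕ
  refine ⟨r.bind fun n => q.map fun y => (n + (y : ℤ)).toNat, fun A hA => ?_⟩
  have hA' : {n : ℤ | {y : ℕ | (n + (y : ℤ)).toNat ∈ A} ∈ q} ∈ r := hA
  let x : ℕ → ((ℕ → ℕ) → ℤ) := fun t f => (f t : ℤ)
  let ev : (ℕ → ℕ) × Polynomial ℕ → ((ℕ → ℕ) → ℤ) → ℤ := fun z g =>
    ∑ n ∈ Finset.range (z.2.natDegree + 1), (z.2.coeff n : ℤ) * (g z.1) ^ n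
  have hev : ∀ z, ∀ H : Finset ℕ,
      ev z (∑ t ∈ H, x t) = ((z.2.eval (∑ t ∈ H, z.1 t) : ℕ) : ℤ) := by
    intro z H
    simp only [ev, x, Polynomial.eval_eq_sum_range, Finset.sum_apply]
    push_cast
    rfl
  let Ps := (F ×ˢ T).image ev
  let d := T.sup Polynomial.natDegree
  have hPs : ∀ P ∈ Ps, IsP (d + 1) P := by
    intro P hP
    obtain ⟨z, hz, rfl⟩ := Finset.mem_image.1 hP
    rw [Finset.mem_product] at hz
    have h1 := (isP_eval z.2 (hT _ hz.2)).comp (Pi.evalAddMonoidHom (fun _ : ℕ → ℕ => ℤ) z.1)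
    exact h1.mono ((Finset.le_sup (f := Polynomial.natDegree) hz.2).trans (Nat.le_succ _))
  obtain ⟨H, hH1, hH2, r', hr', hH3⟩ := pet L hinv hsynd x _
    (Ps.val.map fun P => (P, d)) rfl
    (by
      intro c hc
      obtain ⟨P, hP, rfl⟩ := Multiset.mem_map.1 hc
      exact hPs P hP) Ps
    (by
      intro P hP
      right
      exact ⟨(P, d), Multiset.mem_map.2 ⟨P, hP, rfl⟩, by simpa using IsP.zero _⟩)
    _ N ⟨r, hr, hA'⟩
  obtain ⟨a, -, ha⟩ := Ultrafilter.nonempty_of_mem hH3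
  have hfin : ∀ z ∈ F ×ˢ T,
      {y : ℕ | (a + ev z (∑ t ∈ H, x t) + (y : ℤ)).toNat ∈ A} ∈ (q : Filter ℕ) :=
    fun z hz => ha _ (Finset.mem_image_of_mem _ hz)
  have h1 := (Filter.biInter_finset_mem (F ×ˢ T)).2 hfin
  have h2 : {y : ℕ | 0 ≤ a + (y : ℤ)} ∈ (q : Filter ℕ) := by
    have : {y : ℕ | 0 ≤ a + (y : ℤ)} ∈ (Filter.atTop : Filter ℕ) := by
      refine Filter.mem_atTop_sets.2 ⟨(-a).toNat, fun b hb => ?_⟩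
      show 0 ≤ a + (b : ℤ)
      omega
    exact Filter.hyperfilter_le_cofinite (Nat.cofinite_eq_atTop ▸ this)
  obtain ⟨y, hy1, hy2⟩ := Ultrafilter.nonempty_of_mem (Filter.inter_mem h1 h2)
  refine ⟨(a + (y : ℤ)).toNat, H, hH1, hH2, fun f hf P hP => ?_⟩
  have hy3 := Set.mem_iInter₂.1 hy1 (f, P) (Finset.mk_mem_product hf hP)
  have hy4 : (a + ev (f, P) (∑ t ∈ H, x t) + (y : ℤ)).toNat ∈ A := hy3
  have hy5 : 0 ≤ a + (y : ℤ) := hy2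
  rw [hev] at hy4
  convert hy4 using 1
  simp only
  omega

section
attribute [local instance] Ultrafilter.add Ultrafilter.addSemigroup

theorem uAdd_eq (p q : Ultrafilter ℕ) : uAdd p q = p + q := by
  ext A
  exact Iff.rfl

theorem mem_ideal (p : Ultrafilter ℕ) (hp : IsMinimalIdempotent p) (I : Set (Ultrafilter ℕ))
    (x : Ultrafilter ℕ) (hx : x ∈ I) (hl : ∀ y ∈ I, ∀ z : Ultrafilter ℕ, uAdd z y ∈ I)
    (hr : ∀ y ∈ I, ∀ z : Ultrafilter ℕ, uAdd y z ∈ I) : p ∈ I := by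
  obtain ⟨hpp, hmin⟩ := hp
  simp only [IdempotentUF, uAdd_eq] at *
  obtain ⟨e, ⟨y, hy⟩, hee⟩ := exists_idempotent_in_compact_add_subsemigroup
    (M := Ultrafilter ℕ) Ultrafilter.continuous_add_left (Set.range fun y => y + (x + p))
    ⟨_, x, rfl⟩ (isCompact_range (Ultrafilter.continuous_add_left _))
    (by
      rintro _ ⟨y, rfl⟩ _ ⟨z, rfl⟩
      exact ⟨y + (x + p) + z, by simp only [add_assoc]⟩)
  have hy' : y + (x + p) = e := hy
  have heI : e ∈ I := hy' ▸ hl _ (hr _ hx p) y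
  have hep : e + p = e := by rw [← hy', add_assoc, add_assoc, hpp]
  have hq := hmin (p + e)
    (by rw [add_assoc, ← add_assoc e p e, hep, hee])
    (by rw [add_assoc, hep])
    (by rw [← add_assoc, hpp])
  rw [← hq]
  exact hl _ heI p

end

theorem minimal_conf (p : Ultrafilter ℕ) (hp : IsMinimalIdempotent p) (F : Finset (ℕ → ℕ))
    (T : Finset (Polynomial ℕ)) (hT : ∀ P ∈ T, P.coeff 0 = 0) (N : ℕ) (A : Set ℕ)
    (hA : A ∈ p) : HasConf F T N A := by
  classical
  obtain ⟨x, hx⟩ := exists_conf_ultrafilter F T hT N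
  have := mem_ideal p hp {r | ∀ A ∈ r, HasConf F T N A} x hx ?_ ?_
  · exact this A hA
  · intro y hy z B hB
    have hB' : {n : ℕ | {k : ℕ | n + k ∈ B} ∈ y} ∈ z := hB
    obtain ⟨n, hn⟩ := Ultrafilter.nonempty_of_mem hB'
    obtain ⟨α, H, h1, h2, h3⟩ := hy _ hn
    refine ⟨n + α, H, h1, h2, fun f hf P hP => ?_⟩
    rw [add_assoc]
    exact h3 f hf P hP
  · intro y hy z B hB
    have hB' : {n : ℕ | {k : ℕ | n + k ∈ B} ∈ z} ∈ y := hB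
    obtain ⟨α, H, h1, h2, h3⟩ := hy _ hB'
    have hfin : ∀ w ∈ F ×ˢ T, {k : ℕ | α + w.2.eval (∑ t ∈ H, w.1 t) + k ∈ B} ∈ (z : Filter ℕ) := by
      intro w hw
      rw [Finset.mem_product] at hw
      exact h3 _ hw.1 _ hw.2
    obtain ⟨k, hk⟩ := Ultrafilter.nonempty_of_mem ((Filter.biInter_finset_mem (F ×ˢ T)).2 hfin)
    refine ⟨α + k, H, h1, h2, fun f hf P hP => ?_⟩
    have h4 : α + P.eval (∑ t ∈ H, f t) + k ∈ B :=
      Set.mem_iInter₂.1 hk (f, P) (Finset.mk_mem_product hf hP)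
    convert h4 using 1
    ring

/-- The starred version of a set with respect to an ultrafilter. -/
def star' (p : Ultrafilter ℕ) (A : Set ℕ) : Set ℕ := {x | x ∈ A ∧ {z | x + z ∈ A} ∈ p}

theorem star_mem {p : Ultrafilter ℕ} (hp : IdempotentUF p) {A : Set ℕ} (hA : A ∈ p) :
    star' p A ∈ p := by
  have h1 : A ∈ uAdd p p := by rw [hp]; exact hA
  have h2 : {x : ℕ | {z : ℕ | x + z ∈ A} ∈ p} ∈ p := h1
  exact Filter.inter_mem hA h2

theorem star_shift {p : Ultrafilter ℕ} (hp : IdempotentUF p) {A : Set ℕ} {x : ℕ}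
    (hx : x ∈ star' p A) : {z | x + z ∈ star' p A} ∈ p := by
  have := star_mem hp hx.2
  refine Filter.mem_of_superset this ?_
  rintro z ⟨h1, h2⟩
  refine ⟨h1, ?_⟩
  have h3 : {w : ℕ | x + (z + w) ∈ A} ∈ p := h2
  simpa only [add_assoc] using h3

theorem exists_diff (P : ℕ → ℕ) (hP : IsPolyZeroConst P) (s : ℕ) :
    ∃ Q : Polynomial ℕ, Q.coeff 0 = 0 ∧ ∀ y, P (s + y) = P s + Q.eval y := by
  obtain ⟨P', -, h⟩ := hP
  let R := P'.comp (Polynomial.X + Polynomial.C s)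
  have hR : ∀ y, R.eval y = P (s + y) := by
    intro y
    simp [R, h, add_comm]
  refine ⟨R.divX * Polynomial.X, by simp, fun y => ?_⟩
  have h1 : R.coeff 0 = P s := by
    rw [Polynomial.coeff_zero_eq_eval_zero, hR, add_zero]
  rw [← hR, ← h1]
  conv_lhs => rw [← Polynomial.divX_mul_X_add R]
  simp [add_comm]

theorem single_step (p : Ultrafilter ℕ) (hp : IsMinimalIdempotent p) (T : Finset (ℕ → ℕ))
    (hT : ∀ P ∈ T, IsPolyZeroConst P) {ι : Type} (C : ι → Set ℕ) (V : Finset ι)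
    (F : Finset (ℕ → ℕ)) (N : ℕ) :
    ∃ z : ℕ × Finset ℕ, z.2.Nonempty ∧ (∀ t ∈ z.2, N < t) ∧
      ∀ v ∈ V, ∀ a ≤ N, ∀ s ≤ N, (∀ P ∈ T, {z | a + P s + z ∈ star' p (C v)} ∈ p) →
        ∀ f ∈ F, ∀ P ∈ T, a + z.1 + P (s + ∑ t ∈ z.2, f t) ∈ star' p (C v) := by
  classical
  choose Q hQ0 hQ using fun (P : {P // P ∈ T}) (s : ℕ) => exists_diff P.1 (hT P.1 P.2) s
  let T' : Finset (Polynomial ℕ) :=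
    (T.attach ×ˢ Finset.range (N + 1)).image fun w => Q w.1 w.2
  let idx := V ×ˢ Finset.range (N + 1) ×ˢ Finset.range (N + 1) ×ˢ T
  let B : ι × ℕ × ℕ × (ℕ → ℕ) → Set ℕ := fun w =>
    {z | (∀ P ∈ T, {z | w.2.1 + P w.2.2.1 + z ∈ star' p (C w.1)} ∈ p) →
      w.2.1 + w.2.2.2 w.2.2.1 + z ∈ star' p (C w.1)}
  have hB : ∀ w ∈ idx, B w ∈ (p : Filter ℕ) := by
    intro w hw
    simp only [idx, Finset.mem_product] at hw
    by_cases h : ∀ P ∈ T, {z | w.2.1 + P w.2.2.1 + z ∈ star' p (C w.1)} ∈ p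
    · refine Filter.mem_of_superset (h _ hw.2.2.2) ?_
      intro z hz _
      exact hz
    · refine Filter.mem_of_superset Filter.univ_mem ?_
      intro z _ h'
      exact absurd h' h
  obtain ⟨α, H, h1, h2, h3⟩ := minimal_conf p hp F T'
    (by
      intro P hP
      obtain ⟨w, -, rfl⟩ := Finset.mem_image.1 hP
      exact hQ0 _ _) N _ ((Filter.biInter_finset_mem idx).2 hB)
  refine ⟨(α, H), h1, h2, ?_⟩
  intro v hv a ha s hs hgood f hf P hP
  have h4 := h3 f hf (Q ⟨P, hP⟩ s) (Finset.mem_image.2 ⟨(⟨P, hP⟩, s), by simp; omega, rfl⟩)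
  have h5 := Set.mem_iInter₂.1 h4 (v, a, s, P) (by simp [idx, hv, hP]; omega)
  have h6 := h5 hgood
  have h7 := hQ ⟨P, hP⟩ s (∑ t ∈ H, f t)
  simp only at h6 h7 ⊢
  rw [h7]
  convert h6 using 1
  ring

open Classical in
theorem chain_sum_le (G : ℕ → Finset (ℕ → ℕ)) (hG : ∀ i j, i < j → G i ⊂ G j)
    (g : Finset (ℕ → ℕ) → ℕ) (β : Finset ℕ) (j : ℕ) (hβ : ∀ i ∈ β, i < j) :
    ∑ i ∈ β, g (G i) ≤ ∑ F ∈ (G j).ssubsets, g F := by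
  have hinj : Function.Injective G := by
    intro i k hik
    rcases lt_trichotomy i k with h | h | h
    · exact absurd hik (hG _ _ h).ne
    · exact h
    · exact absurd hik.symm (hG _ _ h).ne
  rw [← Finset.sum_image (f := g) (g := G) (s := β) (fun a _ b _ h => hinj h)]
  apply Finset.sum_le_sum_of_subset
  intro F hF
  obtain ⟨i, hi, rfl⟩ := Finset.mem_image.1 hF
  exact Finset.mem_ssubsets.2 (hG _ _ (hβ i hi))

open Classical in
theorem chain_dsum_le (G : ℕ → Finset (ℕ → ℕ)) (hG : ∀ i j, i < j → G i ⊂ G j)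
    (f : ℕ → ℕ → ℕ) (hf : ∀ i, f i ∈ G i)
    (H : Finset (ℕ → ℕ) → Finset ℕ) (β : Finset ℕ) (j : ℕ) (hβ : ∀ i ∈ β, i < j) :
    ∑ i ∈ β, ∑ t ∈ H (G i), f i t ≤
      ∑ F ∈ (G j).ssubsets, ∑ t ∈ H F, ∑ f' ∈ G j, f' t := by
  refine le_trans ?_ (chain_sum_le G hG (fun F => ∑ t ∈ H F, ∑ f' ∈ G j, f' t) β j hβ)
  refine Finset.sum_le_sum fun i hi => Finset.sum_le_sum fun t _ => ?_
  exact Finset.single_le_sum (f := fun f' : ℕ → ℕ => f' t) (fun _ _ => Nat.zero_le _)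
    ((hG i j (hβ i hi)).1 (hf i))

open Classical in
theorem exists_rec (step : Finset (ℕ → ℕ) → ℕ → ℕ × Finset ℕ) :
    ∃ φ : Finset (ℕ → ℕ) → ℕ × Finset ℕ, ∀ G, φ G = step G
      (∑ F ∈ G.ssubsets, ((φ F).1 + ∑ t ∈ (φ F).2, (t + ∑ f ∈ G, f t))) := by
  let Hs : ∀ s : Finset (ℕ → ℕ), (∀ t ⊂ s, ℕ × Finset ℕ) → ℕ × Finset ℕ := fun G ih =>
    step G (∑ F ∈ G.ssubsets.attach, ((ih F.1 (Finset.mem_ssubsets.1 F.2)).1 +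
      ∑ t ∈ (ih F.1 (Finset.mem_ssubsets.1 F.2)).2, (t + ∑ f ∈ G, f t)))
  refine ⟨Finset.strongInduction Hs, fun G => ?_⟩
  rw [Finset.strongInduction_eq]
  simp only [Hs]
  congr 1
  exact Finset.sum_attach G.ssubsets (fun F => (Finset.strongInduction Hs F).1 +
      ∑ t ∈ (Finset.strongInduction Hs F).2, (t + ∑ f ∈ G, f t))

theorem single (p : Ultrafilter ℕ) (hp : IsMinimalIdempotent p) (T : Finset (ℕ → ℕ))
    (hT : ∀ P ∈ T, IsPolyZeroConst P) {ι : Type} (V : Finset (ℕ → ℕ) → Finset ι)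
    (C : ι → Set ℕ) (hC : ∀ G, ∀ v ∈ V G, C v ∈ p) :
    ∃ (α : Finset (ℕ → ℕ) → ℕ) (H : Finset (ℕ → ℕ) → Finset ℕ),
      (∀ F, (H F).Nonempty) ∧ (∀ F G, F ⊂ G → ∀ x ∈ H F, ∀ y ∈ H G, x < y) ∧
      ∀ G : ℕ → Finset (ℕ → ℕ), (∀ i j, i < j → G i ⊂ G j) →
        ∀ f : ℕ → ℕ → ℕ, (∀ i, f i ∈ G i) → ∀ β : Finset ℕ, β.Nonempty →
        ∀ v, (∀ i ∈ β, v ∈ V (G i)) → ∀ P ∈ T,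
          (∑ i ∈ β, α (G i)) + P (∑ i ∈ β, ∑ t ∈ H (G i), f i t) ∈ C v := by
  classical
  have hP0 : ∀ P ∈ T, P 0 = 0 := by
    intro P hP
    obtain ⟨P', h0, h⟩ := hT P hP
    rw [h, ← Polynomial.coeff_zero_eq_eval_zero, h0]
  choose step hs1 hs2 hs3 using fun G N => single_step p hp T hT C (V G) G N
  obtain ⟨φ, hφ⟩ := exists_rec step
  let bnd : Finset (ℕ → ℕ) → ℕ := fun G =>
    ∑ F ∈ G.ssubsets, ((φ F).1 + ∑ t ∈ (φ F).2, (t + ∑ f ∈ G, f t))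
  have hφ' : ∀ G, φ G = step G (bnd G) := fun G => by
    rw [hφ]
  have hb : ∀ G, bnd G = ∑ F ∈ G.ssubsets, (φ F).1 + (∑ F ∈ G.ssubsets, ∑ t ∈ (φ F).2, t +
      ∑ F ∈ G.ssubsets, ∑ t ∈ (φ F).2, ∑ f ∈ G, f t) := by
    intro G
    simp only [bnd, Finset.sum_add_distrib]
  refine ⟨fun G => (φ G).1, fun G => (φ G).2, ?_, ?_, ?_⟩
  · intro F
    simp only [hφ']
    exact hs1 _ _
  · intro F G hFG x hx y hy
    have h1 : bnd G < y := by
      change y ∈ (φ G).2 at hy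
      rw [hφ'] at hy
      exact hs2 _ _ y hy
    have h2 : x ≤ ∑ t ∈ (φ F).2, t :=
      Finset.single_le_sum (f := fun t : ℕ => t) (fun _ _ => Nat.zero_le _) hx
    have h3 : ∑ t ∈ (φ F).2, t ≤ ∑ F ∈ G.ssubsets, ∑ t ∈ (φ F).2, t :=
      Finset.single_le_sum (f := fun F => ∑ t ∈ (φ F).2, t) (fun _ _ => Nat.zero_le _)
        (Finset.mem_ssubsets.2 hFG)
    have := hb G
    omega
  · intro G hG f hf β hβ v hv
    suffices h : (∀ P ∈ T, {z | (∑ i ∈ β, (φ (G i)).1) +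
          P (∑ i ∈ β, ∑ t ∈ (φ (G i)).2, f i t) + z ∈ star' p (C v)} ∈ p) ∧
        (β.Nonempty → ∀ P ∈ T, (∑ i ∈ β, (φ (G i)).1) +
          P (∑ i ∈ β, ∑ t ∈ (φ (G i)).2, f i t) ∈ star' p (C v)) from
      fun P hP => (h.2 hβ P hP).1
    have hCv : C v ∈ p := by
      obtain ⟨i, hi⟩ := hβ
      exact hC _ v (hv i hi)
    clear hβ
    induction β using Finset.induction_on_max with
    | empty =>
      refine ⟨fun P hP => ?_, fun h => absurd h (by simp)⟩
      simpa [hP0 P hP] using star_mem hp.1 hCv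
    | insert j β hj ih =>
      have ih1 := (ih fun i hi => hv i (Finset.mem_insert_of_mem hi)).1
      have hjn : j ∉ β := fun h => lt_irrefl _ (hj j h)
      have e1 := chain_sum_le G hG (fun F => (φ F).1) β j hj
      have e2 := chain_dsum_le G hG f hf (fun F => (φ F).2) β j hj
      have e3 := hb (G j)
      have key : ∀ P ∈ T, (∑ i ∈ insert j β, (φ (G i)).1) +
          P (∑ i ∈ insert j β, ∑ t ∈ (φ (G i)).2, f i t) ∈ star' p (C v) := by
        intro P hP
        have h := hs3 (G j) (bnd (G j)) v (hv j (Finset.mem_insert_self _ _))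
          (∑ i ∈ β, (φ (G i)).1) (by omega) (∑ i ∈ β, ∑ t ∈ (φ (G i)).2, f i t) (by omega)
          ih1 (f j) (hf j) P hP
        rw [← hφ'] at h
        rw [Finset.sum_insert hjn, Finset.sum_insert hjn, add_comm (φ (G j)).1,
          add_comm (∑ t ∈ (φ (G j)).2, f j t)]
        exact h
      exact ⟨fun P hP => star_shift hp.1 (key P hP), fun _ => key⟩

theorem multi (T : Finset (ℕ → ℕ)) (hT : ∀ P ∈ T, IsPolyZeroConst P) (m : ℕ) :
    ∀ (a : Fin m → ℕ) (p : Fin m → Ultrafilter ℕ) (_ : ∀ i, IsMinimalIdempotent (p i))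
    (ι : Type) (V : Finset (ℕ → ℕ) → Finset ι) (_ : ∀ F G, F ⊆ G → V F ⊆ V G)
    (B : ι → Set ℕ) (_ : ∀ G, ∀ v ∈ V G, B v ∈ linComb m a p),
    ∃ (α : Fin m → Finset (ℕ → ℕ) → ℕ) (H : Fin m → Finset (ℕ → ℕ) → Finset ℕ),
      (∀ l F, (H l F).Nonempty) ∧ (∀ l F G, F ⊂ G → ∀ x ∈ H l F, ∀ y ∈ H l G, x < y) ∧
      ∀ G : ℕ → Finset (ℕ → ℕ), (∀ i j, i < j → G i ⊂ G j) →
        ∀ f : ℕ → ℕ → ℕ, (∀ i, f i ∈ G i) →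
        ∀ P : Fin m → ℕ → ℕ, (∀ l, P l ∈ T) →
        ∀ β : Fin m → Finset ℕ, (∀ l, (β l).Nonempty) →
          (∀ l l' : Fin m, l < l' → ∀ x ∈ β l, ∀ y ∈ β l', x < y) →
        ∀ (k : ℕ) (v : ι), v ∈ V (G k) → (∀ l, ∀ i ∈ β l, k ≤ i) →
          (∑ l : Fin m, a l * ((∑ i ∈ β l, α l (G i)) +
              P l (∑ i ∈ β l, ∑ t ∈ H l (G i), f i t))) ∈ B v := by
  classical
  induction m with
  | zero =>
    intro a p _ ι V hV B hB
    refine ⟨fun _ _ => 0, fun _ _ => {0}, by simp, fun l => l.elim0, ?_⟩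
    intro G _ f _ P _ β _ _ k v hv _
    have h1 : B v ∈ (pure 0 : Ultrafilter ℕ) := hB _ v hv
    simpa using h1
  | succ m ih =>
    intro a p hp ι V hV B hB
    let C : ι → Set ℕ := fun v => {x | {y | a 0 * x + y ∈ B v} ∈
      linComb m (fun i => a i.succ) fun i => p i.succ}
    have hC : ∀ G, ∀ v ∈ V G, C v ∈ p 0 := fun G v hv => hB G v hv
    obtain ⟨α0, H0, h01, h02, h03⟩ := single (p 0) (hp 0) T hT V C hC
    let S1 : Finset (ℕ → ℕ) → ℕ := fun G => ∑ F ∈ G.ssubsets, α0 F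
    let S2 : Finset (ℕ → ℕ) → ℕ := fun G => ∑ F ∈ G.ssubsets, ∑ t ∈ H0 F, ∑ f ∈ G, f t
    let S : Finset (ℕ → ℕ) → ℕ := fun G => S1 G + ∑ P ∈ T, P (S2 G)
    have hTmono : ∀ P ∈ T, Monotone P := by
      intro P hP x y hxy
      obtain ⟨P', -, h⟩ := hT P hP
      rw [h, h, Polynomial.eval_eq_sum_range, Polynomial.eval_eq_sum_range]
      gcongr
    have hss : ∀ F G : Finset (ℕ → ℕ), F ⊆ G → F.ssubsets ⊆ G.ssubsets := by
      intro F G hFG K hK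
      rw [Finset.mem_ssubsets] at hK ⊢
      exact lt_of_lt_of_le hK hFG
    have hS1 : ∀ F G, F ⊆ G → S1 F ≤ S1 G := fun F G hFG =>
      Finset.sum_le_sum_of_subset (hss F G hFG)
    have hS2 : ∀ F G, F ⊆ G → S2 F ≤ S2 G := fun F G hFG =>
      (Finset.sum_le_sum fun K _ => Finset.sum_le_sum fun t _ =>
        Finset.sum_le_sum_of_subset hFG).trans (Finset.sum_le_sum_of_subset (hss F G hFG))
    have hS : ∀ F G, F ⊆ G → S F ≤ S G := fun F G hFG =>
      add_le_add (hS1 F G hFG) (Finset.sum_le_sum fun P hP => hTmono P hP (hS2 F G hFG))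
    let V' : Finset (ℕ → ℕ) → Finset (ι × ℕ) := fun G =>
      (V G ×ˢ Finset.range (S G + 1)).filter fun z => z.2 ∈ C z.1
    obtain ⟨α', H', h1, h2, h3⟩ := ih (fun i => a i.succ) (fun i => p i.succ)
      (fun i => hp i.succ) (ι × ℕ) V'
      (by
        intro F G hFG z hz
        simp only [V', Finset.mem_filter, Finset.mem_product, Finset.mem_range] at hz ⊢
        have := hS F G hFG
        exact ⟨⟨hV F G hFG hz.1.1, by omega⟩, hz.2⟩)
      (fun z => {y | a 0 * z.2 + y ∈ B z.1})
      (by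
        intro G z hz
        exact (Finset.mem_filter.1 hz).2)
    refine ⟨Fin.cons α0 α', Fin.cons H0 H', ?_, ?_, ?_⟩
    · intro l
      refine Fin.cases ?_ (fun l => ?_) l
      · exact h01
      · exact h1 l
    · intro l
      refine Fin.cases ?_ (fun l => ?_) l
      · exact h02
      · exact h2 l
    · intro G hG f hf P hP β hβ hlt k v hv hk
      have hsub : ∀ i j, i ≤ j → G i ⊆ G j := by
        intro i j hij
        rcases hij.lt_or_eq with h | h
        · exact (hG i j h).1
        · rw [h]
      have hx := h03 G hG f hf (β 0) (hβ 0) v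
        (fun i hi => hV _ _ (hsub k i (hk 0 i hi)) hv) (P 0) (hP 0)
      let j := (β 0).max' (hβ 0) + 1
      have hj : ∀ i ∈ β 0, i < j := fun i hi => Nat.lt_succ_of_le (Finset.le_max' _ i hi)
      have hj' := hlt 0
      have hkj : k ≤ j := by
        obtain ⟨i, hi⟩ := hβ 0
        exact (hk 0 i hi).trans (hj i hi).le
      have hbound : (∑ i ∈ β 0, α0 (G i)) + P 0 (∑ i ∈ β 0, ∑ t ∈ H0 (G i), f i t) ≤ S (G j) := by
        refine add_le_add (chain_sum_le G hG α0 (β 0) j hj) ?_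
        refine (hTmono _ (hP 0) (chain_dsum_le G hG f hf H0 (β 0) j hj)).trans ?_
        exact Finset.single_le_sum (f := fun P : ℕ → ℕ => P (S2 (G j)))
          (fun _ _ => Nat.zero_le _) (hP 0)
      have hfin := h3 G hG f hf (fun l => P l.succ) (fun l => hP l.succ) (fun l => β l.succ)
        (fun l => hβ l.succ) (fun l l' hll => hlt l.succ l'.succ (Fin.succ_lt_succ_iff.2 hll)) j
        (v, (∑ i ∈ β 0, α0 (G i)) + P 0 (∑ i ∈ β 0, ∑ t ∈ H0 (G i), f i t))
        (by
          simp only [V', Finset.mem_filter, Finset.mem_product, Finset.mem_range]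
          exact ⟨⟨hV _ _ (hsub k j hkj) hv, by omega⟩, hx⟩)
        (by
          intro l i hi
          exact hlt 0 l.succ (Fin.succ_pos l) _ (Finset.max'_mem _ (hβ 0)) i hi)
      rw [Fin.sum_univ_succ]
      exact hfin

/-- Polynomial-image extension of the linear-combination polynomial central sets theorem,
several minimal idempotents. -/
theorem image_linear_comb_polynomial_CST_II (m : ℕ) (hm : 1 ≤ m)
    (h : ℕ → ℕ) (hh : IsPolyZeroConst h) (a : Fin m → ℕ)
    (p : Fin m → Ultrafilter ℕ) (hp : ∀ i, IsMinimalIdempotent (p i))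
    (A : Set ℕ) (hA : A ∈ (linComb m a p).map h)
    (T : Finset (ℕ → ℕ)) (hT : T.Nonempty) (hTP : ∀ P ∈ T, IsPolyZeroConst P) :
    ∃ (α : Fin m → Finset (ℕ → ℕ) → ℕ) (H : Fin m → Finset (ℕ → ℕ) → Finset ℕ),
      (∀ (l : Fin m) (F : Finset (ℕ → ℕ)), F.Nonempty → (H l F).Nonempty) ∧
      (∀ (l : Fin m) (F G : Finset (ℕ → ℕ)), F.Nonempty → F ⊂ G →
        ∀ x ∈ H l F, ∀ y ∈ H l G, x < y) ∧
      (∀ G : ℕ → Finset (ℕ → ℕ),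
        (∀ i, (G i).Nonempty) → (∀ i j, i < j → G i ⊂ G j) →
        ∀ f : ℕ → ℕ → ℕ, (∀ i, f i ∈ G i) →
        ∀ P : Fin m → ℕ → ℕ, (∀ l, P l ∈ T) →
        ∀ β : Fin m → Finset ℕ,
          (∀ l, (β l).Nonempty) →
          (∀ l l' : Fin m, l < l' → ∀ x ∈ β l, ∀ y ∈ β l', x < y) →
          h (∑ l : Fin m, a l * ((∑ i ∈ β l, α l (G i)) +
              P l (∑ i ∈ β l, ∑ t ∈ H l (G i), f i t))) ∈ A) := by
  obtain ⟨α, H, h1, h2, h3⟩ := multi T hTP m a p hp Unit (fun _ => {()}) (fun _ _ _ => le_rfl)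
    (fun _ => h ⁻¹' A) (fun _ _ _ => hA)
  refine ⟨α, H, fun l F _ => h1 l F, fun l F G _ => h2 l F G, ?_⟩
  intro G _ hG f hf P hP β hβ hlt
  exact h3 G hG f hf P hP β hβ hlt 0 () (by simp) (fun _ _ _ => Nat.zero_le _)

end MultiCST
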